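/- arXiv:1404.1569 — 7 statements merged into one kernel-verified Lean document; each statement's English description precedes it below -/
import Mathlib

section
/- Let V be a 3-dimensional real vector space with an almost paracontact structure (φ, ξ, η) and a compatible nondegenerate metric g. Then there exists a vector e₁ ∈ V such that (e₁, φe₁, ξ) is a basis of V which is pairwise g-orthogonal and satisfies g(e₁, e₁) = 1, g(φe₁, φe₁) = −1 and g(ξ, ξ) = 1 (a φ-basis; in particular g has signature (2,1)). -/
/-- A 3-dimensional real vector space with an almost paracontact structure `(φ, ξ, η)`
and a compatible nondegenerate metric `g` admits a `φ`-basis: a vector `e₁` such that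
`(e₁, φ e₁, ξ)` is a pairwise `g`-orthogonal basis with `g(e₁,e₁) = 1`,
`g(φ e₁, φ e₁) = -1` and `g(ξ,ξ) = 1`. -/
theorem almost_paracontact_metric_phi_basis
    {V : Type*} [AddCommGroup V] [Module ℝ V] [FiniteDimensional ℝ V]
    (hdim : Module.finrank ℝ V = 3)
    (φ : V →ₗ[ℝ] V) (ξ : V) (η : V →ₗ[ℝ] ℝ)
    (hφ : ∀ X : V, φ (φ X) = X - η X • ξ)
    (hηξ : η ξ = 1)
    (g : V →ₗ[ℝ] V →ₗ[ℝ] ℝ)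
    (hgsymm : ∀ X Y : V, g X Y = g Y X)
    (hcompat : ∀ X Y : V, g (φ X) (φ Y) = -(g X Y) + η X * η Y)
    (hgnd : ∀ X : V, (∀ Y : V, g X Y = 0) → X = 0) :
    ∃ e₁ : V,
      LinearIndependent ℝ ![e₁, φ e₁, ξ] ∧
      Submodule.span ℝ {e₁, φ e₁, ξ} = ⊤ ∧
      g e₁ (φ e₁) = 0 ∧ g e₁ ξ = 0 ∧ g (φ e₁) ξ = 0 ∧
      g e₁ e₁ = 1 ∧ g (φ e₁) (φ e₁) = -1 ∧ g ξ ξ = 1 := by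
  have hξ0 : ξ ≠ 0 := by
    rintro rfl
    simp at hηξ
  have h3 : ∀ X, η X • φ ξ = η (φ X) • ξ := by
    intro X
    have h1 := hφ (φ X)
    rw [hφ X, map_sub, map_smul] at h1
    exact sub_right_injective h1
  have h4 : φ ξ = η (φ ξ) • ξ := by
    have := h3 ξ
    rwa [hηξ, one_smul] at this
  have hφξ : φ ξ = 0 := by
    have h5 := hφ ξ
    rw [hηξ, one_smul, sub_self] at h5
    have h6 : η (φ ξ) = 0 := by
      have h7 := h3 (φ ξ)
      rw [h5, map_zero, zero_smul] at h7
      rcases smul_eq_zero.1 h7 with h | h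
      · exact h
      · rw [h, map_zero]
    rw [h4, h6, zero_smul]
  have hηφ : ∀ X, η (φ X) = 0 := by
    intro X
    have := h3 X
    rw [hφξ, smul_zero] at this
    exact (smul_eq_zero.1 this.symm).resolve_right hξ0
  have hgξ : ∀ X, g X ξ = η X := by
    intro X
    have := hcompat X ξ
    rw [hφξ, map_zero, hηξ] at this
    linarith
  have horth : ∀ X, η X = 0 → g X (φ X) = 0 := by
    intro X hX
    have h := hcompat X (φ X)
    rw [hφ X, hX, zero_smul, sub_zero, hgsymm (φ X) X] at h
    linarith
  -- a vector of nonzero length in the kernel of η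
  have hex : ∃ X, η X = 0 ∧ g X X ≠ 0 := by
    by_contra! hcon
    have hpol : ∀ X Y, η X = 0 → η Y = 0 → g X Y = 0 := by
      intro X Y hX hY
      have h := hcon (X + Y) (by rw [map_add, hX, hY, add_zero])
      simp only [map_add, LinearMap.add_apply] at h
      rw [hcon X hX, hcon Y hY, hgsymm Y X] at h
      linarith
    have hker : ∀ X, η X = 0 → X = 0 := by
      intro X hX
      apply hgnd
      intro Y
      have h := hpol X (Y - η Y • ξ) hX (by simp [hηξ])
      rw [map_sub, map_smul, hgξ, hX, smul_zero, sub_zero] at h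
      exact h
    have hinj : Function.Injective η := by
      rw [← LinearMap.ker_eq_bot, LinearMap.ker_eq_bot']
      exact hker
    have := LinearMap.finrank_le_finrank_of_injective hinj
    rw [hdim, Module.finrank_self] at this
    omega
  have hpos : ∃ X, η X = 0 ∧ 0 < g X X := by
    obtain ⟨X, hX, hne⟩ := hex
    rcases lt_or_gt_of_ne hne with h | h
    · refine ⟨φ X, hηφ X, ?_⟩
      rw [hcompat, hX]
      linarith
    · exact ⟨X, hX, h⟩
  obtain ⟨X, hX, hXp⟩ := hpos
  obtain ⟨e, he, hee⟩ : ∃ e, η e = 0 ∧ g e e = 1 := by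
    refine ⟨(Real.sqrt (g X X))⁻¹ • X, by simp [hX], ?_⟩
    simp only [map_smul, LinearMap.smul_apply, smul_eq_mul]
    have h1 := Real.mul_self_sqrt hXp.le
    have h2 : Real.sqrt (g X X) ≠ 0 := (Real.sqrt_pos.2 hXp).ne'
    field_simp
    rw [sq, h1]
  have hff : g (φ e) (φ e) = -1 := by rw [hcompat, hee, he]; ring
  have hef := horth e he
  have heξ : g e ξ = 0 := by rw [hgξ, he]
  have hfξ : g (φ e) ξ = 0 := by rw [hgξ, hηφ]
  have hξξ : g ξ ξ = 1 := by rw [hgξ, hηξ]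
  have hli : LinearIndependent ℝ ![e, φ e, ξ] := by
    rw [Fintype.linearIndependent_iff]
    intro c hc
    simp only [Fin.sum_univ_three, Matrix.cons_val] at hc
    have a0 := congrArg (g e) hc
    have a1 := congrArg (g (φ e)) hc
    have a2 := congrArg η hc
    simp only [map_add, map_smul, map_zero, smul_eq_mul, hee, hef, heξ, hff, hfξ,
      hgsymm (φ e) e, he, hηφ, hηξ] at a0 a1 a2
    intro i
    fin_cases i
    · show c 0 = 0
      linarith
    · show c 1 = 0
      linarith
    · show c 2 = 0
      linarith
  refine ⟨e, hli, ?_, hef, heξ, hfξ, hee, hff, hξξ⟩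
  have hs := hli.span_eq_top_of_card_eq_finrank' (by simp [hdim])
  have hr : Set.range ![e, φ e, ξ] = {e, φ e, ξ} := by
    simp only [Matrix.range_cons, Matrix.range_empty, Set.union_empty, Set.singleton_union]
  rwa [hr] at hs
end

section
/- Let V be a 3-dimensional real vector space, g a nondegenerate symmetric bilinear form on V, and R : V × V → End(V) a trilinear map whose associated (0,4)-tensor R̃(X,Y,Z,W) := g(R(X,Y)Z, W) satisfies the curvature symmetries R̃(X,Y,Z,W) = −R̃(Y,X,Z,W), R̃(X,Y,Z,W) = R̃(Z,W,X,Y), and the first Bianchi identity R̃(X,Y,Z,W) + R̃(Y,Z,X,W) + R̃(Z,X,Y,W) = 0. Define Ric(X,Y) := trace of the linear map Z ↦ R(Z,X)Y, let S : V → V be the unique linear map with g(SX, Y) = Ric(X,Y) for all X, Y, and set τ := trace(S). Then for all X, Y, Z, W ∈ V: R̃(X,Y,Z,W) = g(X,W)Ric(Y,Z) − g(X,Z)Ric(Y,W) + g(Y,Z)Ric(X,W) − g(Y,W)Ric(X,Z) − (τ/2)(g(Y,Z)g(X,W) − g(X,Z)g(Y,W)). (In dimension 3 the curvature tensor is determined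 by the Ricci tensor and the scalar curvature.) -/
/-- Component version of the identity, in an orthogonal basis with `d i = g (e i) (e i)`. -/
theorem curvature_components (d : Fin 3 → ℝ) (hd : ∀ i, d i ≠ 0)
    (T : Fin 3 → Fin 3 → Fin 3 → Fin 3 → ℝ)
    (ha : ∀ i j k l, T i j k l = - T j i k l)
    (hp : ∀ i j k l, T i j k l = T k l i j)
    (G : Fin 3 → Fin 3 → ℝ) (hG : ∀ i j, G i j = if i = j then d i else 0)
    (r : Fin 3 → Fin 3 → ℝ) (hr : ∀ i j, r i j = ∑ k, T k i j k / d k)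
    (t : ℝ) (ht : t = ∑ i, r i i / d i) (i j k l : Fin 3) :
    T i j k l = G i l * r j k - G i k * r j l + G j k * r i l - G j l * r i k
        - (t / 2) * (G j k * G i l - G i k * G j l) := by
  have a0 : ∀ i k l, T i i k l = 0 := fun i k l => by linarith [ha i i k l]
  have b0 : ∀ i j k, T i j k k = 0 := fun i j k => by rw [hp, a0]
  have hb : ∀ i j k l, T i j k l = - T i j l k := fun i j k l => by rw [hp, ha, hp]
  have a1 := ha 1 0
  have a2 := ha 2 0
  have a3 := ha 2 1
  have b1 := fun i j => hb i j 1 0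
  have b2 := fun i j => hb i j 2 0
  have b3 := fun i j => hb i j 2 1
  have c1 := hp 0 2 0 1
  have c2 := hp 1 2 0 1
  have c3 := hp 1 2 0 2
  have h0 := hd 0
  have h1 := hd 1
  have h2 := hd 2
  subst ht
  simp only [hr, hG, Fin.sum_univ_three]
  clear hr hG ha hp hb
  fin_cases i <;> fin_cases j <;> fin_cases k <;> fin_cases l <;>
    simp [a0, b0, a1, a2, a3, b1, b2, b3, c1, c2, c3] <;> field_simp <;> ring

/-- A function linear in each of four slots that vanishes on a basis vanishes. -/
theorem zero_of_basis {V : Type*} [AddCommGroup V] [Module ℝ V] (e : Module.Basis (Fin 3) ℝ V)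
    (F : V → V → V → V → ℝ)
    (h1 : ∀ Y Z W, IsLinearMap ℝ (fun X => F X Y Z W))
    (h2 : ∀ X Z W, IsLinearMap ℝ (fun Y => F X Y Z W))
    (h3 : ∀ X Y W, IsLinearMap ℝ (fun Z => F X Y Z W))
    (h4 : ∀ X Y Z, IsLinearMap ℝ (fun W => F X Y Z W))
    (h : ∀ i j k l, F (e i) (e j) (e k) (e l) = 0) (X Y Z W : V) : F X Y Z W = 0 := by
  have key : ∀ f : V → ℝ, IsLinearMap ℝ f → (∀ i, f (e i) = 0) → ∀ x, f x = 0 := by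
    intro f hf hz x
    have : hf.mk' f = 0 := e.ext (fun i => by simpa using hz i)
    simpa using congrArg (fun q : V →ₗ[ℝ] ℝ => q x) this
  refine key _ (h1 Y Z W) (fun i => ?_) X
  refine key _ (h2 _ Z W) (fun j => ?_) Y
  refine key _ (h3 _ _ W) (fun k => ?_) Z
  exact key _ (h4 _ _ _) (fun l => h i j k l) W

/-- In dimension 3, a curvature-like tensor is determined by its Ricci tensor and
scalar curvature:
`R̃(X,Y,Z,W) = g(X,W)Ric(Y,Z) - g(X,Z)Ric(Y,W) + g(Y,Z)Ric(X,W) - g(Y,W)Ric(X,Z)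
  - (τ/2)(g(Y,Z)g(X,W) - g(X,Z)g(Y,W))`. -/
theorem threeDim_curvature_determined_by_ricci
    {V : Type*} [AddCommGroup V] [Module ℝ V] [FiniteDimensional ℝ V]
    (hdim : Module.finrank ℝ V = 3)
    (g : V →ₗ[ℝ] V →ₗ[ℝ] ℝ)
    (hgsymm : ∀ X Y : V, g X Y = g Y X)
    (hgnd : ∀ X : V, (∀ Y : V, g X Y = 0) → X = 0)
    (R : V →ₗ[ℝ] V →ₗ[ℝ] V →ₗ[ℝ] V)
    (hanti : ∀ X Y Z W : V, g (R X Y Z) W = -(g (R Y X Z) W))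
    (hpair : ∀ X Y Z W : V, g (R X Y Z) W = g (R Z W X) Y)
    (hbianchi : ∀ X Y Z W : V,
      g (R X Y Z) W + g (R Y Z X) W + g (R Z X Y) W = 0)
    (Ric : V → V → ℝ)
    (hRic : ∀ X Y : V, Ric X Y = LinearMap.trace ℝ V ((R.flip X).flip Y))
    (S : V →ₗ[ℝ] V)
    (hS : ∀ X Y : V, g (S X) Y = Ric X Y)
    (τ : ℝ) (hτ : τ = LinearMap.trace ℝ V S) :
    ∀ X Y Z W : V, g (R X Y Z) W =
      g X W * Ric Y Z - g X Z * Ric Y W + g Y Z * Ric X W - g Y W * Ric X Z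
        - (τ / 2) * (g Y Z * g X W - g X Z * g Y W) := by
  obtain ⟨e0, he0⟩ := LinearMap.BilinForm.exists_orthogonal_basis (B := g) ⟨fun x y => by simpa using hgsymm x y⟩
  let e : Module.Basis (Fin 3) ℝ V := e0.reindex (finCongr hdim)
  have horth : ∀ i j, i ≠ j → g (e i) (e j) = 0 := by
    intro i j hij
    have := he0 (i := (finCongr hdim).symm i) (j := (finCongr hdim).symm j)
      (fun hh => hij ((finCongr hdim).symm.injective hh))
    simpa [e] using this
  have hd : ∀ i, g (e i) (e i) ≠ 0 := by
    intro i hi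
    refine e.ne_zero i (hgnd _ fun Y => ?_)
    have : g (e i) = 0 := e.ext (fun j => by
      by_cases hij : i = j
      · subst hij; simpa using hi
      · simpa using horth i j hij)
    simp [this]
  have hcoord : ∀ i x, e.repr x i = g x (e i) / g (e i) (e i) := by
    intro i x
    rw [eq_div_iff (hd i)]
    conv_rhs => rw [← e.sum_repr x]
    rw [map_sum, LinearMap.sum_apply, Finset.sum_eq_single i]
    · simp
    · intro j _ hj
      simp [horth j i hj]
    · simp
  have htr : ∀ f : V →ₗ[ℝ] V, LinearMap.trace ℝ V f = ∑ i, g (f (e i)) (e i) / g (e i) (e i) := by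
    intro f
    rw [LinearMap.trace_eq_matrix_trace ℝ e f, Matrix.trace]
    simp [LinearMap.toMatrix_apply, hcoord]
  have hbasis : ∀ i j k l, _ := curvature_components (fun i => g (e i) (e i)) hd
    (fun i j k l => g (R (e i) (e j) (e k)) (e l))
    (fun i j k l => hanti _ _ _ _) (fun i j k l => hpair _ _ _ _)
    (fun i j => g (e i) (e j))
    (fun i j => by
      split_ifs with hij
      · rw [hij]
      · exact horth i j hij)
    (fun i j => Ric (e i) (e j)) (fun i j => by simp [hRic, htr])
    τ (by simp [hτ, htr, hS])
  intro X Y Z W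
  rw [← sub_eq_zero]
  simp only [← hS] at hbasis ⊢
  refine zero_of_basis e (fun X Y Z W => g (R X Y Z) W -
      (g X W * g (S Y) Z - g X Z * g (S Y) W + g Y Z * g (S X) W - g Y W * g (S X) Z
        - (τ / 2) * (g Y Z * g X W - g X Z * g Y W))) ?_ ?_ ?_ ?_
    (fun i j k l => sub_eq_zero.2 (hbasis i j k l)) X Y Z W
  all_goals
    intro _ _ _
    constructor
    · intro x y
      simp only [map_add, LinearMap.add_apply]
      ring
    · intro c x
      simp only [map_smul, LinearMap.smul_apply, smul_eq_mul]
      ring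
end

section
/- Let V be a 3-dimensional real vector space, g a nondegenerate symmetric bilinear form on V, ξ ∈ V with g(ξ, ξ) = 1, and η := g(·, ξ). Let R : V × V → End(V) be a curvature-like tensor on (V, g) with Ricci tensor Ric, Ricci operator S and scalar curvature τ = trace(S), and let α be a real number. Suppose R(X,Y)ξ = α²(η(Y)X − η(X)Y) for all X, Y ∈ V. Then for all X, Y, Z ∈ V: R(X,Y)Z = (τ/2 − 2α²)(g(Y,Z)X − g(X,Z)Y) − (τ/2 − 3α²)(g(Y,Z)η(X) − g(X,Z)η(Y))ξ + (τ/2 − 3α²)(η(X)Y − η(Y)X)η(Z). (This is the algebraic content of the curvature formula for α-para Kenmotsu 3-manifolds.) -/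
/-- If a curvature-like tensor on a 3-dimensional pseudo-metric vector space satisfies
`R(X,Y)ξ = α²(η(Y)X - η(X)Y)` (with `η = g(·,ξ)`, `g(ξ,ξ) = 1`), then it has the
α-para Kenmotsu form
`R(X,Y)Z = (τ/2 - 2α²)(g(Y,Z)X - g(X,Z)Y) - (τ/2 - 3α²)(g(Y,Z)η(X) - g(X,Z)η(Y))ξ
  + (τ/2 - 3α²)(η(X)Y - η(Y)X)η(Z)`. -/
theorem curvature_of_alpha_para_kenmotsu_form
    {V : Type*} [AddCommGroup V] [Module ℝ V] [FiniteDimensional ℝ V]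
    (hdim : Module.finrank ℝ V = 3)
    (g : V →ₗ[ℝ] V →ₗ[ℝ] ℝ)
    (hgsymm : ∀ X Y : V, g X Y = g Y X)
    (hgnd : ∀ X : V, (∀ Y : V, g X Y = 0) → X = 0)
    (ξ : V) (hξ : g ξ ξ = 1)
    (η : V → ℝ) (hη : ∀ X : V, η X = g X ξ)
    (R : V →ₗ[ℝ] V →ₗ[ℝ] V →ₗ[ℝ] V)
    (hanti : ∀ X Y Z W : V, g (R X Y Z) W = -(g (R Y X Z) W))
    (hpair : ∀ X Y Z W : V, g (R X Y Z) W = g (R Z W X) Y)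
    (hbianchi : ∀ X Y Z W : V,
      g (R X Y Z) W + g (R Y Z X) W + g (R Z X Y) W = 0)
    (Ric : V → V → ℝ)
    (hRic : ∀ X Y : V, Ric X Y = LinearMap.trace ℝ V ((R.flip X).flip Y))
    (S : V →ₗ[ℝ] V)
    (hS : ∀ X Y : V, g (S X) Y = Ric X Y)
    (τ : ℝ) (hτ : τ = LinearMap.trace ℝ V S)
    (α : ℝ)
    (hRξ : ∀ X Y : V, R X Y ξ = α ^ 2 • (η Y • X - η X • Y)) :
    ∀ X Y Z : V, R X Y Z =
      (τ / 2 - 2 * α ^ 2) • (g Y Z • X - g X Z • Y)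
        - ((τ / 2 - 3 * α ^ 2) * (g Y Z * η X - g X Z * η Y)) • ξ
        + ((τ / 2 - 3 * α ^ 2) * η Z) • (η X • Y - η Y • X) := by
  have skew : ∀ X Y Z W : V, g (R X Y Z) W = -(g (R X Y W) Z) := by
    intro X Y Z W
    rw [hpair X Y Z W, hanti, hpair W Z X Y]
  have hr3 : ∀ X Y W : V, g (R X Y ξ) W = α ^ 2 * (g Y ξ * g X W - g X ξ * g Y W) := by
    intro X Y W
    rw [hRξ, hη, hη]
    simp
  have hr4 : ∀ X Y Z : V, g (R X Y Z) ξ = - (α ^ 2 * (g Y ξ * g X Z - g X ξ * g Y Z)) := by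
    intro X Y Z
    rw [skew, hr3]
  have hr1 : ∀ Y Z W : V, g (R ξ Y Z) W = α ^ 2 * (g W ξ * g Z Y - g Z ξ * g W Y) := by
    intro Y Z W
    rw [hpair, hr3]
  have hr2 : ∀ X Z W : V, g (R X ξ Z) W = - (α ^ 2 * (g W ξ * g Z X - g Z ξ * g W X)) := by
    intro X Z W
    rw [hanti, hr1]
  -- a basis of the orthogonal complement of ξ
  have hker : Module.finrank ℝ (LinearMap.ker (g ξ)) = 2 := by
    have h1 := LinearMap.finrank_range_add_finrank_ker (g ξ)
    have h2 : LinearMap.range (g ξ) = ⊤ := by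
      rw [LinearMap.range_eq_top]
      intro c
      exact ⟨c • ξ, by simp [hξ]⟩
    rw [h2, finrank_top, Module.finrank_self, hdim] at h1
    omega
  let b := Module.finBasisOfFinrankEq ℝ (LinearMap.ker (g ξ)) hker
  obtain ⟨e, he⟩ : ∃ e : V, e = (b 0 : V) := ⟨_, rfl⟩
  obtain ⟨f, hf⟩ : ∃ f : V, f = (b 1 : V) := ⟨_, rfl⟩
  have heξ : g e ξ = 0 := by rw [hgsymm, he]; exact (b 0).2
  have hfξ : g f ξ = 0 := by rw [hgsymm, hf]; exact (b 1).2
  have hspan : ∀ X : V, ∃ x y : ℝ, X = g X ξ • ξ + (x • e + y • f) := by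
    intro X
    have hm : X - g X ξ • ξ ∈ LinearMap.ker (g ξ) := by
      simp [hξ, hgsymm X ξ]
    have h := b.sum_repr ⟨_, hm⟩
    refine ⟨b.repr ⟨_, hm⟩ 0, b.repr ⟨_, hm⟩ 1, ?_⟩
    have h' := congrArg Subtype.val h
    rw [Fin.sum_univ_two] at h'
    simp only [Submodule.coe_add, Submodule.coe_smul] at h'
    rw [he, hf, h']
    abel
  have hindep : ∀ x y : ℝ, x • e + y • f = 0 → x = 0 ∧ y = 0 := by
    intro x y h
    have h0 : x • b 0 + y • b 1 = 0 := by
      apply Subtype.ext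
      simpa [he, hf] using h
    have hli := Fintype.linearIndependent_iff.1 b.linearIndependent ![x, y]
      (by simpa [Fin.sum_univ_two] using h0)
    exact ⟨by simpa using hli 0, by simpa using hli 1⟩
  have hzero : ∀ v : V, g v ξ = 0 → g v e = 0 → g v f = 0 → v = 0 := by
    intro v h1 h2 h3
    apply hgnd
    intro Y
    obtain ⟨x, y, h⟩ := hspan Y
    rw [h]
    simp [h1, h2, h3]
  have hD : g e e * g f f - g e f * g e f ≠ 0 := by
    intro hD
    have h1 : g f f • e + (-g e f) • f = 0 := by
      apply hzero
      · simp [heξ, hfξ]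
      · simp only [map_add, map_smul, LinearMap.add_apply, LinearMap.smul_apply, smul_eq_mul]
        rw [hgsymm f e]
        linarith
      · simp only [map_add, map_smul, LinearMap.add_apply, LinearMap.smul_apply, smul_eq_mul]
        ring
    obtain ⟨h2, h3⟩ := hindep _ _ h1
    have h4 : f = 0 := hzero f hfξ (by rw [hgsymm]; linarith) h2
    have h5 := hindep 0 1 (by simp [h4])
    exact one_ne_zero h5.2
  obtain ⟨k, hk⟩ : ∃ k : ℝ, g (R e f f) e = k * (g e e * g f f - g e f * g e f) :=
    ⟨g (R e f f) e / (g e e * g f f - g e f * g e f), (div_mul_cancel₀ _ hD).symm⟩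
  have self1 : ∀ X Z W : V, g (R X X Z) W = 0 := by
    intro X Z W
    linarith [hanti X X Z W]
  have self2 : ∀ X Y Z : V, g (R X Y Z) Z = 0 := by
    intro X Y Z
    linarith [skew X Y Z Z]
  have hk2 : g (R e f e) f = -(k * (g e e * g f f - g e f * g e f)) := by
    rw [skew, hk]
  have hk3 : g (R f e e) f = k * (g e e * g f f - g e f * g e f) := by
    rw [hanti, hk2]; ring
  have hk4 : g (R f e f) e = -(k * (g e e * g f f - g e f * g e f)) := by
    rw [hanti, hk]
  have form : ∀ X Y Z : V, R X Y Z =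
      k • (g Y Z • X - g X Z • Y)
        - ((k - α ^ 2) * (g Y Z * g X ξ - g X Z * g Y ξ)) • ξ
        + ((k - α ^ 2) * g Z ξ) • (g X ξ • Y - g Y ξ • X) := by
    intro X Y Z
    rw [← sub_eq_zero]
    apply hgnd
    intro W
    obtain ⟨x1, x2, hX⟩ := hspan X
    obtain ⟨y1, y2, hY⟩ := hspan Y
    obtain ⟨z1, z2, hZ⟩ := hspan Z
    obtain ⟨w1, w2, hW⟩ := hspan W
    generalize g X ξ = x0 at hX
    generalize g Y ξ = y0 at hY
    generalize g Z ξ = z0 at hZ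
    generalize g W ξ = w0 at hW
    subst hX hY hZ hW
    have heξ' : g ξ e = 0 := by rw [hgsymm, heξ]
    have hfξ' : g ξ f = 0 := by rw [hgsymm, hfξ]
    have hfe : g f e = g e f := hgsymm f e
    simp only [map_add, map_sub, map_smul, LinearMap.add_apply, LinearMap.sub_apply,
      LinearMap.smul_apply, smul_eq_mul, hr1, hr2, hr3, hr4, self1, self2, hk, hk2, hk3, hk4,
      hξ, heξ, hfξ, heξ', hfξ', hfe]
    ring
  have hRic2 : ∀ X Y : V, Ric X Y = (k + α ^ 2) * g X Y - (k - α ^ 2) * (g X ξ * g Y ξ) := by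
    intro X Y
    have : (R.flip X).flip Y =
        (k * g X Y - (k - α ^ 2) * g Y ξ * g X ξ) • LinearMap.id
        - k • (g Y).smulRight X
        - ((k - α ^ 2) * g X Y) • (g ξ).smulRight ξ
        + ((k - α ^ 2) * g X ξ) • (g Y).smulRight ξ
        + ((k - α ^ 2) * g Y ξ) • (g ξ).smulRight X := by
      ext Z
      simp only [LinearMap.flip_apply, form Z X Y, LinearMap.add_apply, LinearMap.sub_apply,
        LinearMap.smul_apply, LinearMap.smulRight_apply, LinearMap.id_apply]
      rw [hgsymm Y Z, hgsymm ξ Z]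
      module
    rw [hRic, this]
    simp only [map_add, map_sub, map_smul, LinearMap.trace_smulRight, LinearMap.trace_id, hdim,
      smul_eq_mul, hξ]
    rw [hgsymm Y X, hgsymm ξ X]
    push_cast
    ring
  have hS2 : S = (k + α ^ 2) • LinearMap.id - (k - α ^ 2) • (g ξ).smulRight ξ := by
    ext X
    rw [← sub_eq_zero]
    apply hgnd
    intro W
    simp only [map_sub, map_smul, LinearMap.sub_apply, LinearMap.smul_apply, hS, hRic2,
      LinearMap.smulRight_apply, LinearMap.id_apply, smul_eq_mul]
    rw [hgsymm ξ X, hgsymm ξ W]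
    ring
  have hτ2 : τ = 2 * k + 4 * α ^ 2 := by
    rw [hτ, hS2]
    simp only [map_sub, map_smul, LinearMap.trace_smulRight, LinearMap.trace_id, hdim,
      smul_eq_mul, hξ]
    push_cast
    ring
  intro X Y Z
  have e1 : τ / 2 - 2 * α ^ 2 = k := by rw [hτ2]; ring
  have e2 : τ / 2 - 3 * α ^ 2 = k - α ^ 2 := by rw [hτ2]; ring
  rw [e1, e2, hη, hη, hη]
  exact form X Y Z
end

section
/- Let V, g, ξ, η, α, τ and R be a pointwise α-para Kenmotsu curvature model, and define Ric(X,Y) := trace of the linear map Z ↦ R(Z,X)Y. Then for all X, Y ∈ V: Ric(X,Y) = (τ/2 − α²) g(X,Y) + (3α² − τ/2) η(X)η(Y). -/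
/-- In a pointwise α-para Kenmotsu curvature model, `Ric(X,Y) = (τ/2 - α²)g(X,Y) + (3α² - τ/2)η(X)η(Y)`. -/
theorem pointwise_model_ricci
    {V : Type*} [AddCommGroup V] [Module ℝ V] [FiniteDimensional ℝ V]
    (hdim : Module.finrank ℝ V = 3)
    (g : V →ₗ[ℝ] V →ₗ[ℝ] ℝ)
    (hgsymm : ∀ X Y : V, g X Y = g Y X)
    (ξ : V) (hξ : g ξ ξ = 1)
    (η : V → ℝ) (hη : ∀ X : V, η X = g X ξ)
    (α τ : ℝ)
    (R : V →ₗ[ℝ] V →ₗ[ℝ] V →ₗ[ℝ] V)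
    (hR : ∀ X Y Z : V, R X Y Z =
      (τ / 2 - 2 * α ^ 2) • (g Y Z • X - g X Z • Y)
        - ((τ / 2 - 3 * α ^ 2) * (g Y Z * η X - g X Z * η Y)) • ξ
        + ((τ / 2 - 3 * α ^ 2) * η Z) • (η X • Y - η Y • X))
    (Ric : V → V → ℝ)
    (hRic : ∀ X Y : V, Ric X Y = LinearMap.trace ℝ V ((R.flip X).flip Y))
    : ∀ X Y : V, Ric X Y = (τ / 2 - α ^ 2) * g X Y + (3 * α ^ 2 - τ / 2) * (η X * η Y) := by
  intro X Y
  have key : (R.flip X).flip Y =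
      ((τ / 2 - 2 * α ^ 2) * g X Y - (τ / 2 - 3 * α ^ 2) * η Y * η X) •
          (LinearMap.id : V →ₗ[ℝ] V)
        - (τ / 2 - 2 * α ^ 2) • (g Y).smulRight X
        - ((τ / 2 - 3 * α ^ 2) * g X Y) • (g ξ).smulRight ξ
        + ((τ / 2 - 3 * α ^ 2) * η X) • (g Y).smulRight ξ
        + ((τ / 2 - 3 * α ^ 2) * η Y) • (g ξ).smulRight X := by
    ext Z
    simp only [LinearMap.flip_apply, hR, LinearMap.add_apply, LinearMap.sub_apply,
      LinearMap.smul_apply, LinearMap.smulRight_apply, LinearMap.id_apply, hη,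
      hgsymm Y Z, hgsymm ξ Z]
    module
  rw [hRic, key]
  simp only [map_add, map_sub, map_smul, LinearMap.trace_smulRight, LinearMap.trace_id, hdim,
    smul_eq_mul, hη, hξ, hgsymm Y X, hgsymm ξ X, hgsymm Y ξ]
  push_cast
  ring_nf
end

section
/- Let V, g, ξ, η, α, τ and R be a pointwise α-para Kenmotsu curvature model, and let L be the associated concircular curvature tensor, L(X,Y)Z := R(X,Y)Z − (τ/6)(g(Y,Z)X − g(X,Z)Y). Then L(X,Y)ξ = 0 for all X, Y ∈ V if and only if τ = 6α². (An α-para Kenmotsu 3-manifold is ξ-concircularly flat if and only if its scalar curvature equals 6α².) -/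
/-- A pointwise α-para Kenmotsu curvature model is ξ-concircularly flat, i.e. `L(X,Y)ξ = 0` for all `X, Y`, if and only if `τ = 6α²`. -/
theorem pointwise_model_xi_concircularly_flat_iff
    {V : Type*} [AddCommGroup V] [Module ℝ V] [FiniteDimensional ℝ V]
    (hdim : Module.finrank ℝ V = 3)
    (g : V →ₗ[ℝ] V →ₗ[ℝ] ℝ)
    (hgsymm : ∀ X Y : V, g X Y = g Y X)
    (ξ : V) (hξ : g ξ ξ = 1)
    (η : V → ℝ) (hη : ∀ X : V, η X = g X ξ)
    (α τ : ℝ)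
    (R : V →ₗ[ℝ] V →ₗ[ℝ] V →ₗ[ℝ] V)
    (hR : ∀ X Y Z : V, R X Y Z =
      (τ / 2 - 2 * α ^ 2) • (g Y Z • X - g X Z • Y)
        - ((τ / 2 - 3 * α ^ 2) * (g Y Z * η X - g X Z * η Y)) • ξ
        + ((τ / 2 - 3 * α ^ 2) * η Z) • (η X • Y - η Y • X))
    (L : V → V → V → V)
    (hL : ∀ X Y Z : V, L X Y Z = R X Y Z - (τ / 6) • (g Y Z • X - g X Z • Y))
    : (∀ X Y : V, L X Y ξ = 0) ↔ τ = 6 * α ^ 2 := by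
  have key : ∀ X Y : V, L X Y ξ = (α ^ 2 - τ / 6) • (g Y ξ • X - g X ξ • Y) := by
    intro X Y
    rw [hL, hR, hη X, hη Y, hη ξ, hξ]
    module
  constructor
  · intro h
    have hv : ∃ v : V, v - g v ξ • ξ ≠ 0 := by
      by_contra! hc
      have := finrank_le_one (R := ℝ) ξ
        (fun w => ⟨g w ξ, (sub_eq_zero.mp (hc w)).symm⟩)
      omega
    obtain ⟨v, hv⟩ := hv
    have h1 := h v ξ
    rw [key, hξ, one_smul] at h1
    rcases smul_eq_zero.mp h1 with h2 | h2
    · linarith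
    · exact absurd h2 hv
  · intro h X Y
    rw [key, h]
    have : α ^ 2 - 6 * α ^ 2 / 6 = 0 := by ring
    rw [this, zero_smul]
end

section
/- Let V, g, ξ, η, α, τ and R be a pointwise α-para Kenmotsu curvature model with α ≠ 0, and let h be a symmetric bilinear form on V satisfying the parallel-tensor curvature condition h(R(Z,X)Y, W) + h(Y, R(Z,X)W) = 0 for all X, Y, Z, W ∈ V. Then h(X, ξ) = η(X) h(ξ, ξ) for all X ∈ V. (This is the key algebraic step in the proof that a second order parallel tensor on an α-para Kenmotsu 3-manifold is a constant multiple of the metric.) -/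
/-- If `α ≠ 0` and a symmetric bilinear form `h` satisfies the parallel-tensor curvature condition on a pointwise α-para Kenmotsu curvature model, then `h(X,ξ) = η(X)h(ξ,ξ)`. -/
theorem pointwise_model_parallel_tensor_step
    {V : Type*} [AddCommGroup V] [Module ℝ V] [FiniteDimensional ℝ V]
    (hdim : Module.finrank ℝ V = 3)
    (g : V →ₗ[ℝ] V →ₗ[ℝ] ℝ)
    (hgsymm : ∀ X Y : V, g X Y = g Y X)
    (ξ : V) (hξ : g ξ ξ = 1)
    (η : V → ℝ) (hη : ∀ X : V, η X = g X ξ)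
    (α τ : ℝ)
    (R : V →ₗ[ℝ] V →ₗ[ℝ] V →ₗ[ℝ] V)
    (hR : ∀ X Y Z : V, R X Y Z =
      (τ / 2 - 2 * α ^ 2) • (g Y Z • X - g X Z • Y)
        - ((τ / 2 - 3 * α ^ 2) * (g Y Z * η X - g X Z * η Y)) • ξ
        + ((τ / 2 - 3 * α ^ 2) * η Z) • (η X • Y - η Y • X))
    (hα : α ≠ 0)
    (h : V →ₗ[ℝ] V →ₗ[ℝ] ℝ)
    (hsymm : ∀ X Y : V, h X Y = h Y X)
    (hpar : ∀ X Y Z W : V, h (R Z X Y) W + h Y (R Z X W) = 0)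
    : ∀ X : V, h X ξ = η X * h ξ ξ := by
  intro X
  have key := hpar X ξ ξ ξ
  have hR' : R ξ X ξ = (α ^ 2) • (η X • ξ - X) := by
    have h1 : g X ξ = η X := (hη X).symm
    have h2 : η ξ = 1 := by rw [hη, hξ]
    rw [hR, hξ, h1, h2]
    module
  rw [hR', hsymm ξ] at key
  simp only [map_smul, map_sub, LinearMap.smul_apply, LinearMap.sub_apply, smul_eq_mul] at key
  have h3 : α ^ 2 * (η X * h ξ ξ - h X ξ) = 0 := by linarith
  rcases mul_eq_zero.mp h3 with h4 | h4
  · exact absurd h4 (pow_ne_zero 2 hα)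
  · linarith
end

section
/- Let V, g, ξ, η, α, τ and R be a pointwise α-para Kenmotsu curvature model, define Ric(X,Y) := trace of the linear map Z ↦ R(Z,X)Y, and let P be the associated projective curvature tensor, P(X,Y)Z := R(X,Y)Z − (1/2)(Ric(Y,Z)X − Ric(X,Z)Y). Then P(X,Y)ξ = 0 for all X, Y ∈ V. (An α-para Kenmotsu 3-manifold is ξ-projectively flat.) -/
/-- A pointwise α-para Kenmotsu curvature model is ξ-projectively flat: `P(X,Y)ξ = 0`. -/
theorem pointwise_model_xi_projectively_flat
    {V : Type*} [AddCommGroup V] [Module ℝ V] [FiniteDimensional ℝ V]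
    (hdim : Module.finrank ℝ V = 3)
    (g : V →ₗ[ℝ] V →ₗ[ℝ] ℝ)
    (hgsymm : ∀ X Y : V, g X Y = g Y X)
    (ξ : V) (hξ : g ξ ξ = 1)
    (η : V → ℝ) (hη : ∀ X : V, η X = g X ξ)
    (α τ : ℝ)
    (R : V →ₗ[ℝ] V →ₗ[ℝ] V →ₗ[ℝ] V)
    (hR : ∀ X Y Z : V, R X Y Z =
      (τ / 2 - 2 * α ^ 2) • (g Y Z • X - g X Z • Y)
        - ((τ / 2 - 3 * α ^ 2) * (g Y Z * η X - g X Z * η Y)) • ξ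
        + ((τ / 2 - 3 * α ^ 2) * η Z) • (η X • Y - η Y • X))
    (Ric : V → V → ℝ)
    (hRic : ∀ X Y : V, Ric X Y = LinearMap.trace ℝ V ((R.flip X).flip Y))
    (P : V → V → V → V)
    (hP : ∀ X Y Z : V, P X Y Z =
      R X Y Z - (1 / 2 : ℝ) • (Ric Y Z • X - Ric X Z • Y))
    : ∀ X Y : V, P X Y ξ = 0 := by
  have hRξ : ∀ X Y : V, R X Y ξ = α ^ 2 • (g Y ξ • X - g X ξ • Y) := by
    intro X Y
    rw [hR]
    simp only [hη, hξ]
    module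
  have hRicξ : ∀ X : V, Ric X ξ = 2 * α ^ 2 * g X ξ := by
    intro X
    have h : (R.flip X).flip ξ
        = α ^ 2 • (g X ξ • (LinearMap.id : V →ₗ[ℝ] V) - (g ξ).smulRight X) := by
      ext Z
      simp [hRξ, hgsymm ξ Z]
    rw [hRic, h]
    simp only [map_smul, map_sub, LinearMap.trace_id, LinearMap.trace_smulRight, hdim,
      hgsymm ξ X, smul_eq_mul]
    push_cast
    ring
  intro X Y
  rw [hP, hRξ, hRicξ, hRicξ]
  module
end
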